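/- Define Δ_d^sat ∈ ℂ[A] as the polynomial of smallest total degree (unique up to scalar) such that Δ_d = Δ_d^sat · Δ^k for some k ∈ ℕ. Then Δ_d^sat is a perfect square in ℂ[A], and its square root √(Δ_d^sat) divides det K_d(f) in ℂ[A] for every nonzero f ∈ ℂ[x_1,…,x_n]_d. -/

import Mathlib

noncomputable section

/-! ## Zariski topology on complex affine space -/

/-- The Zariski topology on the affine space `ι → ℂ`: the basic open sets are the
complements of hypersurfaces. -/
def zTop (ι : Type*) : TopologicalSpace (ι → ℂ) :=
  TopologicalSpace.generateFrom
    {U | ∃ p : MvPolynomial ι ℂ, U = {x | MvPolynomial.eval x p ≠ 0}}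

/-- Zariski open subset of affine space. -/
def zOpen {ι : Type*} (U : Set (ι → ℂ)) : Prop := @IsOpen _ (zTop ι) U

/-- Zariski closed subset of affine space. -/
def zClosed {ι : Type*} (Z : Set (ι → ℂ)) : Prop := @IsClosed _ (zTop ι) Z

/-- Zariski density. -/
def zDense {ι : Type*} (S : Set (ι → ℂ)) : Prop := @Dense _ (zTop ι) S

/-- Zariski closure. -/
def zClosure {ι : Type*} (S : Set (ι → ℂ)) : Set (ι → ℂ) := @closure _ (zTop ι) S

/-- Irreducibility in the Zariski topology. -/
def zIrred {ι : Type*} (S : Set (ι → ℂ)) : Prop := @IsIrreducible _ (zTop ι) S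

/-- The dimension of a subset of affine space: the topological Krull dimension of the
subspace topology induced by the Zariski topology. -/
def zDim {ι : Type*} (S : Set (ι → ℂ)) : WithBot ℕ∞ :=
  @topologicalKrullDim S (TopologicalSpace.induced Subtype.val (zTop ι))

/-- The common zero set of a family of polynomials. -/
def vanishSet {ι : Type*} (S : Set (MvPolynomial ι ℂ)) : Set (ι → ℂ) :=
  {x | ∀ p ∈ S, MvPolynomial.eval x p = 0}

/-- The ideal of all polynomials vanishing on a subset of affine space. -/
def vanishingIdealOf {ι : Type*} (X : Set (ι → ℂ)) : Ideal (MvPolynomial ι ℂ) where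
  carrier := {p | ∀ x ∈ X, MvPolynomial.eval x p = 0}
  add_mem' := by
    intro a b ha hb x hx
    simp [ha x hx, hb x hx]
  zero_mem' := by
    intro x hx
    simp
  smul_mem' := by
    intro c p hp x hx
    simp [smul_eq_mul, hp x hx]

/-- A subset of `ι → ℂ` is a cone if it is stable under scalar multiplication. -/
def IsCone {ι : Type*} (X : Set (ι → ℂ)) : Prop :=
  ∀ (c : ℂ) (v : ι → ℂ), v ∈ X → c • v ∈ X

/-- The affine-linear subspace cut out by `k` affine-linear equations whose coefficients are
recorded by `a` (the `none` coordinate records the constant term). -/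
def affSlice {ι : Type*} [Fintype ι] {k : ℕ} (a : Fin k × Option ι → ℂ) : Set (ι → ℂ) :=
  {x | ∀ j : Fin k, a (j, none) + ∑ i : ι, a (j, some i) * x i = 0}

/-- `hasConeDegree C k δ` : the projective variety with affine cone `C ⊆ ℂ^ι` and projective
dimension `k` has degree `δ`, expressed by saying that a generic affine-linear slice of `C` of
codimension `k + 1` consists of exactly `δ` points. -/
def hasConeDegree {ι : Type*} [Fintype ι] (C : Set (ι → ℂ)) (k δ : ℕ) : Prop :=
  ∃ U : Set (Fin (k + 1) × Option ι → ℂ), zOpen U ∧ zDense U ∧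
    ∀ a ∈ U, (C ∩ affSlice a).ncard = δ

/-! ## Eigenvectors and the Kalman variety -/

/-- `v` is an eigenvector of the matrix `A`. -/
def IsEigenvector {n : ℕ} (A : Matrix (Fin n) (Fin n) ℂ) (v : Fin n → ℂ) : Prop :=
  v ≠ 0 ∧ ∃ lam : ℂ, A.mulVec v = lam • v

/-- The space of `n × n` complex matrices, presented as an affine space. -/
abbrev MatSpace (n : ℕ) := Fin n × Fin n → ℂ

/-- The matrix corresponding to a point of `MatSpace n`. -/
def toMat {n : ℕ} (A : MatSpace n) : Matrix (Fin n) (Fin n) ℂ :=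
  Matrix.of fun i j => A (i, j)

/-- The affine cone over the Kalman variety `𝒦(X)` of the projective variety whose affine
cone is `X`: all matrices having an eigenvector lying on `X`. -/
def kalmanCone {n : ℕ} (X : Set (Fin n → ℂ)) : Set (MatSpace n) :=
  {A | ∃ v ∈ X, IsEigenvector (toMat A) v}



/-! ## Symmetric powers of matrices and Kalman matrices -/

/-- Index set for the monomials of degree `d` in `n` variables. -/
abbrev MonIdx (n d : ℕ) := Sym (Fin n) d

/-- The exponent vector of the monomial indexed by `σ`. -/
def monExp {n d : ℕ} (σ : MonIdx n d) : Fin n →₀ ℕ :=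
  Multiset.toFinsupp (σ : Multiset (Fin n))

/-- The generic `n × n` matrix, whose entries are the variables of `ℂ[A]`. -/
def genMat (n : ℕ) : Matrix (Fin n) (Fin n) (MvPolynomial (Fin n × Fin n) ℂ) :=
  Matrix.of fun i j => MvPolynomial.X (i, j)

/-- The `d`-th symmetric power `ρ_d(A)` of a square matrix `A`, i.e. the matrix (in the basis of
monomials of degree `d`) of the induced action of `A` on forms of degree `d`: the entry at
`(τ, σ)` is the coefficient of `x^σ` in `(A·x)^τ`. -/
def symPow {R : Type*} [CommRing R] {n : ℕ} (d : ℕ) (A : Matrix (Fin n) (Fin n) R) :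
    Matrix (MonIdx n d) (MonIdx n d) R :=
  Matrix.of fun τ σ =>
    MvPolynomial.coeff (monExp σ)
      (∏ j : Fin n, (∑ k : Fin n, MvPolynomial.C (A j k) * MvPolynomial.X k) ^ (monExp τ j))

/-- The coefficient vector of a form of degree `d`. -/
def coeffVec {n : ℕ} (d : ℕ) (f : MvPolynomial (Fin n) ℂ) : MonIdx n d → ℂ :=
  fun σ => MvPolynomial.coeff (monExp σ) f

/-- The form of degree `d` with coefficient vector `c`. -/
def polyOf {n d : ℕ} (c : MonIdx n d → ℂ) : MvPolynomial (Fin n) ℂ :=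
  ∑ σ : MonIdx n d, MvPolynomial.monomial (monExp σ) (c σ)

/-- The rectangular Kalman matrix of order `d` associated with a `p × N` coefficient matrix `C`:
its rows are the rows of `C`, `C·ρ_d(A)`, ..., `C·ρ_d(A)^{t-1}` for the generic matrix `A`. -/
def kalmanMat {n d p : ℕ} (t : ℕ) (C : Matrix (Fin p) (MonIdx n d) ℂ) :
    Matrix (Fin t × Fin p) (MonIdx n d) (MvPolynomial (Fin n × Fin n) ℂ) :=
  Matrix.of fun r τ =>
    ∑ κ : MonIdx n d, MvPolynomial.C (C r.2 κ) * ((symPow d (genMat n)) ^ (r.1 : ℕ)) κ τ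

/-- The square Kalman matrix `K_d(f)` of a form `f` with coefficient vector `c`: the rows are
`C_f ρ_d(A)^i` for `i = 0, …, N - 1` (indexed by monomials through a fixed enumeration). -/
def kalmanSq {n : ℕ} (d : ℕ) (c : MonIdx n d → ℂ) :
    Matrix (MonIdx n d) (MonIdx n d) (MvPolynomial (Fin n × Fin n) ℂ) :=
  Matrix.of fun σ τ =>
    ∑ κ : MonIdx n d, MvPolynomial.C (c κ) *
      ((symPow d (genMat n)) ^ ((Fintype.equivFin (MonIdx n d)) σ : ℕ)) κ τ

/-- The determinant of the square Kalman matrix of order `d`. -/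
def kalmanDet {n : ℕ} (d : ℕ) (c : MonIdx n d → ℂ) : MvPolynomial (Fin n × Fin n) ℂ :=
  (kalmanSq d c).det

/-- The locus of matrices at which all maximal minors of a (rectangular) matrix of polynomials
in `ℂ[A]` vanish. -/
def maxMinorsZeroSet {n d : ℕ} {ridx : Type*}
    (M : Matrix ridx (MonIdx n d) (MvPolynomial (Fin n × Fin n) ℂ)) : Set (MatSpace n) :=
  {A | ∀ e : MonIdx n d → ridx, Function.Injective e →
    MvPolynomial.eval A (Matrix.det (Matrix.of fun σ τ => M (e σ) τ)) = 0}



/-! ## Polarizations and μ-Kalman varieties -/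

/-- Evaluation of the multihomogeneous polarization `f_μ` of `f` at a tuple of vectors
`v_1, …, v_s` (up to a nonzero rational normalization constant): the coefficient of `t^μ`
in `f(t_1 v_1 + ⋯ + t_s v_s)`. -/
def polarEval {n s : ℕ} (f : MvPolynomial (Fin n) ℂ) (μ : Fin s → ℕ)
    (v : Fin s → Fin n → ℂ) : ℂ :=
  MvPolynomial.coeff (Finsupp.equivFunOnFinite.symm μ)
    (MvPolynomial.eval₂ MvPolynomial.C
      (fun k => ∑ i : Fin s, MvPolynomial.C (v i k) * MvPolynomial.X i) f)

/-- The affine cone over the `μ`-Kalman variety `𝒦_μ(f)`: the Zariski closure of the set of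
matrices admitting linearly independent eigenvectors `v_1, …, v_s` with `f_μ(v_1, …, v_s) = 0`. -/
def muKalmanCone {n : ℕ} (f : MvPolynomial (Fin n) ℂ) {s : ℕ} (μ : Fin s → ℕ) :
    Set (MatSpace n) :=
  zClosure {A | ∃ v : Fin s → (Fin n → ℂ),
    (∀ i, IsEigenvector (toMat A) (v i)) ∧ LinearIndependent ℂ v ∧ polarEval f μ v = 0}

/-- The parts of a partition of `d`, listed as a tuple. -/
def partTuple (d : ℕ) (μ : Nat.Partition d) : Fin (Multiset.card μ.parts) → ℕ :=
  fun i => μ.parts.toList.get (i.cast (Multiset.length_toList _).symm)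

/-- The multiset of nonzero exponents of the monomial indexed by `σ`. -/
def expMultiset {n d : ℕ} (σ : Sym (Fin n) d) : Multiset ℕ :=
  Multiset.filter (fun e => e ≠ 0)
    (Multiset.map (fun i => Multiset.toFinsupp (σ : Multiset (Fin n)) i) Finset.univ.val)

/-! ## Tangent spaces, smooth points and singular loci -/

/-- The Zariski tangent space of `X ⊆ ℂ^ι` at `x`: the common kernel of the differentials at
`x` of all polynomials vanishing on `X`. -/
def tangentSpace {ι : Type*} [Fintype ι] (X : Set (ι → ℂ)) (x : ι → ℂ) :
    Submodule ℂ (ι → ℂ) where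
  carrier := {u | ∀ p : MvPolynomial ι ℂ, (∀ y ∈ X, MvPolynomial.eval y p = 0) →
      ∑ i : ι, u i * MvPolynomial.eval x (MvPolynomial.pderiv i p) = 0}
  add_mem' := by
    intro a b ha hb p hp
    have h1 := ha p hp
    have h2 := hb p hp
    simp only [Pi.add_apply, add_mul, Finset.sum_add_distrib, h1, h2, add_zero]
  zero_mem' := by
    intro p hp
    simp
  smul_mem' := by
    intro c u hu p hp
    have h1 := hu p hp
    simp only [Pi.smul_apply, smul_eq_mul, mul_assoc, ← Finset.mul_sum, h1, mul_zero]

/-- The local dimension of `X` at `x`, in the Zariski topology. -/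
def zLocalDim {ι : Type*} (X : Set (ι → ℂ)) (x : ι → ℂ) : WithBot ℕ∞ :=
  ⨅ (U : Set (ι → ℂ)) (_ : zOpen U) (_ : x ∈ U), zDim (X ∩ U)

/-- `x` is a smooth point of `X`: the Zariski tangent space has dimension equal to the local
dimension of `X` at `x`. -/
def smoothAt {ι : Type*} [Fintype ι] (X : Set (ι → ℂ)) (x : ι → ℂ) : Prop :=
  ((Module.finrank ℂ (tangentSpace X x) : ℕ∞) : WithBot ℕ∞) = zLocalDim X x

/-- The affine cone over the singular locus of the projective variety whose affine cone is `X`: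
the nonzero points of `X` that are not smooth points. -/
def projSingCone {ι : Type*} [Fintype ι] (X : Set (ι → ℂ)) : Set (ι → ℂ) :=
  {x | x ∈ X ∧ x ≠ 0 ∧ ¬ smoothAt X x}

/-- The affine cone over the (reduced) singular locus of the Kalman variety of the projective
variety with affine cone `X`. -/
def singKalmanCone {n : ℕ} (X : Set (Fin n → ℂ)) : Set (MatSpace n) :=
  zClosure (projSingCone (zClosure (kalmanCone X)))



/-! ## The spaces `ℙ_s = ℙ^{n²-1} × (ℙ^{n-1})^s` (as multicones) -/

/-- Coordinates for the multicone over `ℙ^{n²-1} × (ℙ^{n-1})^{×s}`. -/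
abbrev MIdx (n s : ℕ) := (Fin n × Fin n) ⊕ (Fin s × Fin n)

/-- The matrix component of a point of the multicone. -/
def matPart {n s : ℕ} (x : MIdx n s → ℂ) : MatSpace n := fun ij => x (Sum.inl ij)

/-- The `i`-th vector component of a point of the multicone. -/
def vecPart {n s : ℕ} (x : MIdx n s → ℂ) (i : Fin s) : Fin n → ℂ := fun k => x (Sum.inr (i, k))

/-- A partition of `{1, …, s}` into `k` (indexed) nonempty pairwise disjoint blocks. -/
structure IdxPartition (s k : ℕ) where
  block : Fin k → Finset (Fin s)
  nonempty : ∀ i, (block i).Nonempty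
  disj : ∀ i j, i ≠ j → Disjoint (block i) (block j)
  cover : ∀ p : Fin s, ∃ i, p ∈ block i

/-- The minimal representative of the `i`-th block. -/
def IdxPartition.rep {s k : ℕ} (P : IdxPartition s k) (i : Fin k) : Fin s :=
  (P.block i).min' (P.nonempty i)

/-- The finest partition, all of whose blocks are singletons. -/
def singletonPartition (s : ℕ) : IdxPartition s s where
  block i := {i}
  nonempty i := ⟨i, by simp⟩
  disj i j h := Finset.disjoint_singleton.2 h
  cover p := ⟨p, by simp⟩

/-- A tuple of nonzero vectors is `P`-compatible: vectors within each block of `P` are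
proportional, and representatives of the distinct blocks are linearly independent. -/
def PCompatible {n s k : ℕ} (P : IdxPartition s k) (v : Fin s → Fin n → ℂ) : Prop :=
  (∀ p, v p ≠ 0) ∧
  (∀ i, ∀ p ∈ P.block i, ∀ q ∈ P.block i, ∃ c : ℂ, v p = c • v q) ∧
  (∀ r : Fin k → Fin s, (∀ i, r i ∈ P.block i) → LinearIndependent ℂ (fun i => v (r i)))

/-- The multicone over `W_s`: tuples `(A, v_1, …, v_s)` where each `v_i` is an eigenvector of
the (nonzero) matrix `A`. -/
def Wcone (n s : ℕ) : Set (MIdx n s → ℂ) :=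
  {x | matPart x ≠ 0 ∧ ∀ i, IsEigenvector (toMat (matPart x)) (vecPart x i)}

/-- The multicone over `W_{s,P}`: the Zariski closure of the set of tuples in `W_s` whose
vector part is `P`-compatible. -/
def WsPcone (n : ℕ) {s k : ℕ} (P : IdxPartition s k) : Set (MIdx n s → ℂ) :=
  zClosure {x | x ∈ Wcone n s ∧ PCompatible P (fun i => vecPart x i)}

/-! ## Multidegrees -/

/-- Parameter space for a multiprojective slice of multidegree type `γ`. -/
abbrev MSliceParam (n s : ℕ) (γ : Fin (s + 1) → ℕ) : Type :=
  (Fin (n ^ 2 - γ 0) × Option (Fin n × Fin n)) ⊕ ((Σ j : Fin s, Fin (n - γ j.succ)) × Option (Fin n))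

/-- The multiprojective affine-linear slice with parameters `a`: it cuts the matrix factor by
`n² - γ 0` affine-linear equations and the `j`-th vector factor by `n - γ (j+1)` affine-linear
equations. -/
def mSlice {n s : ℕ} (γ : Fin (s + 1) → ℕ) (a : MSliceParam n s γ → ℂ) :
    Set (MIdx n s → ℂ) :=
  {x | (∀ r : Fin (n ^ 2 - γ 0),
          a (Sum.inl (r, none)) +
            ∑ ij : Fin n × Fin n, a (Sum.inl (r, some ij)) * x (Sum.inl ij) = 0) ∧
       (∀ j : Fin s, ∀ r : Fin (n - γ j.succ),
          a (Sum.inr (⟨j, r⟩, none)) +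
            ∑ k : Fin n, a (Sum.inr (⟨j, r⟩, some k)) * x (Sum.inr (j, k)) = 0)}

/-- `hasMD W γ δ` : the coefficient of the monomial `h_0^{γ 0} h_1^{γ 1} ⋯ h_s^{γ s}` in the
Chow class of the multiprojective variety with multicone `W ⊆ ℂ^{n²} × (ℂ^n)^s` equals `δ`:
a generic multiprojective slice of type `γ` meets `W` in exactly `δ` points. -/
def hasMD {n s : ℕ} (W : Set (MIdx n s → ℂ)) (γ : Fin (s + 1) → ℕ) (δ : ℕ) : Prop :=
  ∃ U : Set (MSliceParam n s γ → ℂ), zOpen U ∧ zDense U ∧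
    ∀ a ∈ U, (W ∩ mSlice γ a).ncard = δ

/-- The exponent vector of the monomial `h_0 · h_1^{n-1} ⋯ h_i^{n-2} ⋯ h_s^{n-1}`. -/
def specialExp (n s : ℕ) (i : Fin s) : Fin (s + 1) → ℕ :=
  fun j => if j = 0 then 1 else if j = i.succ then n - 2 else n - 1

/-- `γ` lies in the box of admissible exponents of the Chow ring of `ℙ^{n²-1} × (ℙ^{n-1})^s`. -/
def inBox (n s : ℕ) (γ : Fin (s + 1) → ℕ) : Prop :=
  γ 0 < n ^ 2 ∧ ∀ j : Fin s, γ j.succ < n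

/-- `representsClass W c q` : the polynomial `q` represents the Chow class of the
multiprojective variety with multicone `W`, of codimension `c`: its coefficients in the
admissible box in degree `c` are the multidegrees of `W`, and all other coefficients vanish. -/
def representsClass {n s : ℕ} (W : Set (MIdx n s → ℂ)) (c : ℕ)
    (q : MvPolynomial (Fin (s + 1)) ℤ) : Prop :=
  (∀ γ : Fin (s + 1) → ℕ, inBox n s γ → (∑ j, γ j) = c →
      ∃ δ : ℕ, q.coeff (Finsupp.equivFunOnFinite.symm γ) = (δ : ℤ) ∧ hasMD W γ δ) ∧
  (∀ γ : Fin (s + 1) → ℕ, ¬ (inBox n s γ ∧ (∑ j, γ j) = c) →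
      q.coeff (Finsupp.equivFunOnFinite.symm γ) = 0)

/-! ## The Chow ring of `ℙ^{n²-1} × (ℙ^{n-1})^s` -/

/-- The defining ideal of the Chow ring `ℤ[h_0, …, h_s]/(h_0^{n²}, h_1^n, …, h_s^n)`. -/
def chowIdeal (n s : ℕ) : Ideal (MvPolynomial (Fin (s + 1)) ℤ) :=
  Ideal.span ({MvPolynomial.X 0 ^ n ^ 2} ∪
    Set.range fun j : Fin s => MvPolynomial.X j.succ ^ n)

/-- The Chow ring `A^*(ℙ_s) = ℤ[h_0, …, h_s]/(h_0^{n²}, h_1^n, …, h_s^n)`. -/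
abbrev ChowRing (n s : ℕ) := MvPolynomial (Fin (s + 1)) ℤ ⧸ chowIdeal n s

/-- The variable substitution `h_0 ↦ t_0`, `h_i ↦ t_{q_i}` underlying `φ_P`. -/
def blockVarMap {s k : ℕ} (P : IdxPartition s k) : Fin (k + 1) → Fin (s + 1) :=
  Fin.cases 0 fun i => (P.rep i).succ

lemma phiP_aux {n s k : ℕ} (P : IdxPartition s k) :
    ∀ a ∈ chowIdeal n k,
      ((Ideal.Quotient.mk (chowIdeal n s)).comp
        (MvPolynomial.rename (R := ℤ) (blockVarMap P)).toRingHom) a = 0 := by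
  intro a ha
  rw [RingHom.comp_apply, Ideal.Quotient.eq_zero_iff_mem]
  have hmap : (MvPolynomial.rename (R := ℤ) (blockVarMap P)).toRingHom a ∈
      Ideal.map (MvPolynomial.rename (R := ℤ) (blockVarMap P)).toRingHom
        (chowIdeal n k) :=
    Ideal.mem_map_of_mem _ ha
  have hle : Ideal.map
      (MvPolynomial.rename (R := ℤ) (blockVarMap P)).toRingHom
      (chowIdeal n k) ≤ chowIdeal n s := by
    rw [chowIdeal, Ideal.map_span, Ideal.span_le]
    rintro q ⟨p, hp, rfl⟩
    rcases hp with hp | ⟨j, rfl⟩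
    · rw [Set.mem_singleton_iff] at hp
      subst hp
      simp only [AlgHom.toRingHom_eq_coe, RingHom.coe_coe, map_pow, MvPolynomial.rename_X,
        Fin.cases_zero]
      exact Ideal.subset_span (Or.inl rfl)
    · simp only [AlgHom.toRingHom_eq_coe, RingHom.coe_coe, map_pow, MvPolynomial.rename_X,
        Fin.cases_succ]
      exact Ideal.subset_span (Or.inr ⟨P.rep j, rfl⟩)
  exact hle hmap

/-- The ring map `φ_P : A^*(ℙ_k) → A^*(ℙ_s)` sending `h_0 ↦ t_0` and `h_i ↦ t_{q_i}`. -/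
def phiP (n : ℕ) {s k : ℕ} (P : IdxPartition s k) : ChowRing n k →+* ChowRing n s :=
  Ideal.Quotient.lift (chowIdeal n k)
    ((Ideal.Quotient.mk (chowIdeal n s)).comp
      (MvPolynomial.rename (R := ℤ) (blockVarMap P)).toRingHom)
    (phiP_aux P)



/-! ## Discriminants of characteristic polynomials -/

/-- `∏_{i<j} (l i - l j)^2` for a list `l`. -/
def listPairProdSq (l : List ℂ) : ℂ :=
  ∏ p ∈ Finset.univ.filter (fun p : Fin l.length × Fin l.length => p.1 < p.2),
    (l.get p.1 - l.get p.2) ^ 2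

/-- The product of the squared differences of all pairs of elements of a multiset; applied to
the multiset of roots of a characteristic polynomial this is the discriminant. -/
def pairProdSq (m : Multiset ℂ) : ℂ := listPairProdSq m.toList

/-- The coordinate vector (for the action of the symmetric power `ρ_d`) of the symmetric
product `v_1 ⋯ v_d` of the vectors `v i`: its `σ`-th coordinate is the coefficient of
`t_1 ⋯ t_d` in `∏_k (∑_i t_i v i k)^{σ_k}`. -/
def symProdVec {n d : ℕ} (v : Fin d → Fin n → ℂ) : MonIdx n d → ℂ := fun σ =>
  MvPolynomial.coeff (Finsupp.equivFunOnFinite.symm fun _ : Fin d => 1)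
    (∏ k : Fin n, (∑ i : Fin d, MvPolynomial.C (v i k) * MvPolynomial.X i) ^ (monExp σ k))

/-!
Let `y` be the eigenvalues of a diagonalizable matrix `A`. The eigenvalues of `ρ_d(A)` are the
monomials `y^τ` of degree `d`, so `Δ_d(A)` is the square of their Vandermonde determinant. As a
polynomial in `y`, the latter is `V(y)^m * P(y)`, where `V` is the Vandermonde determinant of `y`
itself and `P` is coprime to `V`. Its square is symmetric, and so is `P ^ 2`; the square root `P` of
a symmetric polynomial could only change sign under a transposition `(i j)` if it were divisible by
`y_i - y_j`, so `P` is symmetric. Hence `P(y) = g(A)` for a polynomial `g ∈ ℂ[A]`, and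
`Δ_d = g ^ 2 * Δ ^ m` with `g` coprime to `Δ`; minimality forces `Δ_d^sat = g ^ 2` up to a scalar.

For the divisibility, let `Q` be a matrix of left eigenvectors of the generic matrix `A`. Then
`ρ_d(Q)` diagonalizes `ρ_d(A)`, so `det ρ_d(Q)^N * det K_d(f)` is divisible by the Vandermonde
determinant of the monomials `y^τ`, and thus by `g(A)`, over the integral closure of `ℂ[A]`. The
rows of `Q` can be written down as `(1, …, 1) ∏_{j ≠ i} (A - y_j)`, which makes `det Q` a divisor
of a power of `V(y)` times the determinant `w` of the Krylov matrix of `(1, …, 1)`. Replacing `V(y)`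
by its square `Δ` and descending to the normal ring `ℂ[A]`, one gets
`g ∣ (Δ^a * w)^b * det K_d(f)` for some `a` and `b`. Both `Δ` and `w` restrict to powers of `V` on
the diagonal matrices, without a drop in degree, whereas `g` restricts to `P`; therefore `g` is
coprime to both and divides `det K_d(f)`.
-/

section IntegralExtensions

variable {R S : Type*} [CommRing R] [IsDomain R] [CommRing S] [IsDomain S] [Algebra R S]

theorem dvd_of_algebraMap_dvd_algebraMap [IsIntegrallyClosed R] [Algebra.IsIntegral R S]
    [FaithfulSMul R S] {r s : R} (h : algebraMap R S r ∣ algebraMap R S s) : r ∣ s := by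
  obtain ⟨t, ht⟩ := h
  by_cases hr : r = 0
  · rw [hr, map_zero, zero_mul, FaithfulSMul.algebraMap_eq_zero_iff] at ht
    rw [ht]
    exact dvd_zero r
  have hrK : algebraMap R (FractionRing R) r ≠ 0 := by
    simpa using hr
  let _ := FractionRing.liftAlgebra R (FractionRing S)
  have := FractionRing.isScalarTower_liftAlgebra R (FractionRing S)
  have quotient_eq : algebraMap (FractionRing R) (FractionRing S)
      (algebraMap R _ s / algebraMap R _ r) = algebraMap S (FractionRing S) t := by
    rw [map_div₀, ← IsScalarTower.algebraMap_apply, ← IsScalarTower.algebraMap_apply,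
      IsScalarTower.algebraMap_apply R S _ s, IsScalarTower.algebraMap_apply R S _ r, ht, map_mul]
    exact mul_div_cancel_left₀ _ (by simpa using hr)
  have quotient_integral :
      IsIntegral R (algebraMap R (FractionRing R) s / algebraMap R (FractionRing R) r) := by
    rw [← isIntegral_algebraMap_iff (algebraMap (FractionRing R) (FractionRing S)).injective,
      quotient_eq]
    exact (Algebra.IsIntegral.isIntegral t).algebraMap
  obtain ⟨q, hq⟩ := IsIntegrallyClosed.isIntegral_iff.1 quotient_integral
  refine ⟨q, IsFractionRing.injective R (FractionRing R) ?_⟩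
  rw [map_mul, hq, mul_div_cancel₀ _ hrK]

end IntegralExtensions

section SplittingMonicPolynomials

theorem exists_fin_map_eq {α : Type*} {n : ℕ} (s : Multiset α) (hs : Multiset.card s = n) :
    ∃ y : Fin n → α, Finset.univ.val.map y = s := by
  induction s using Quotient.inductionOn with
  | h l =>
    subst hs
    exact ⟨l.get, (Fin.univ_val_map _).trans (congrArg _ (List.ofFn_get l))⟩

theorem exists_eq_prod_X_sub_C_of_splits {K : Type*} [CommRing K] [IsDomain K] {n : ℕ}
    {p : Polynomial K} (hp : p.Splits) (hmonic : p.Monic) (hn : p.natDegree = n) :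
    ∃ y : Fin n → K, p = ∏ i, (Polynomial.X - Polynomial.C (y i)) := by
  obtain ⟨y, hy⟩ := exists_fin_map_eq p.roots (hp.natDegree_eq_card_roots.symm.trans hn)
  refine ⟨y, ?_⟩
  conv_lhs => rw [hp.eq_prod_roots_of_monic hmonic, ← hy, Multiset.map_map]
  rfl

/-- The absolute integral closure of a domain, over which every monic polynomial splits. -/
abbrev AbsoluteIntegralClosure (R : Type*) [CommRing R] [IsDomain R] : Type _ :=
  integralClosure R (AlgebraicClosure (FractionRing R))

instance faithfulSMul_absoluteIntegralClosure (R : Type*) [CommRing R] [IsDomain R] :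
    FaithfulSMul R (AbsoluteIntegralClosure R) :=
  have := FaithfulSMul.trans R (FractionRing R) (AlgebraicClosure (FractionRing R))
  FaithfulSMul.tower_bot R (AbsoluteIntegralClosure R) (AlgebraicClosure (FractionRing R))

theorem exists_eq_prod_X_sub_C_absoluteIntegralClosure {R : Type*} [CommRing R] [IsDomain R]
    {n : ℕ} {p : Polynomial R} (hmonic : p.Monic) (hn : p.natDegree = n) :
    ∃ y : Fin n → AbsoluteIntegralClosure R,
      p.map (algebraMap R _) = ∏ i, (Polynomial.X - Polynomial.C (y i)) := by
  set Ω := AlgebraicClosure (FractionRing R)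
  obtain ⟨z, hz⟩ := exists_eq_prod_X_sub_C_of_splits
    (IsAlgClosed.splits (p.map (algebraMap R Ω))) (hmonic.map _)
    ((hmonic.natDegree_map _).trans hn)
  have integral_root (i : Fin n) : IsIntegral R (z i) := by
    refine ⟨p, hmonic, ?_⟩
    rw [← Polynomial.eval_map, hz, Polynomial.eval_prod]
    exact Finset.prod_eq_zero (Finset.mem_univ i) (by simp)
  refine ⟨fun i => ⟨z i, integral_root i⟩, ?_⟩
  apply Polynomial.map_injective (algebraMap (AbsoluteIntegralClosure R) Ω) Subtype.val_injective
  rw [Polynomial.map_map, ← IsScalarTower.algebraMap_eq, hz, Polynomial.map_prod]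
  simp only [Polynomial.map_sub, Polynomial.map_X, Polynomial.map_C]
  rfl

end SplittingMonicPolynomials

section TotalDegree

open MvPolynomial

variable {σ τ K : Type*} [Field K]

theorem isUnit_of_ne_zero_of_totalDegree_eq_zero {p : MvPolynomial σ K} (hp : p ≠ 0)
    (hdeg : p.totalDegree = 0) : IsUnit p := by
  rw [totalDegree_eq_zero_iff_eq_C] at hdeg
  rw [hdeg] at hp ⊢
  exact (isUnit_iff_ne_zero.2 fun h => hp (by rw [h, C_0])).map C

theorem totalDegree_aeval_le_of_totalDegree_le_one {f : σ → MvPolynomial τ K}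
    (hf : ∀ i, (f i).totalDegree ≤ 1) (p : MvPolynomial σ K) :
    (aeval f p).totalDegree ≤ p.totalDegree := by
  rw [aeval_def, eval₂_eq]
  refine totalDegree_finsetSum_le fun s hs => ?_
  calc (algebraMap K (MvPolynomial τ K) (p.coeff s) * ∏ i ∈ s.support, f i ^ s i).totalDegree
      ≤ ∑ i ∈ s.support, (f i ^ s i).totalDegree := by
        refine (totalDegree_mul _ _).trans ?_
        rw [algebraMap_eq, totalDegree_C, zero_add]
        exact totalDegree_finsetProd _ _
    _ ≤ ∑ i ∈ s.support, s i := Finset.sum_le_sum fun i _ =>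
        (totalDegree_pow _ _).trans (by simpa using Nat.mul_le_mul_left (s i) (hf i))
    _ ≤ p.totalDegree := le_totalDegree hs

/-- A common factor that becomes constant under a specialization would make the degree of `w`
drop. -/
theorem isRelPrime_of_totalDegree_map_eq
    (φ : MvPolynomial σ K →ₐ[K] MvPolynomial τ K)
    (hφ : ∀ p, (φ p).totalDegree ≤ p.totalDegree) {g w : MvPolynomial σ K} (hw : φ w ≠ 0)
    (hdeg : (φ w).totalDegree = w.totalDegree) (hrel : IsRelPrime (φ g) (φ w)) :
    IsRelPrime g w := by
  rintro p hpg ⟨r, rfl⟩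
  have hunit : IsUnit (φ p) := hrel (map_dvd φ hpg) (by rw [map_mul]; exact dvd_mul_right _ _)
  rw [map_mul] at hw hdeg
  have hp : p ≠ 0 := by rintro rfl; simp at hw
  have hr : r ≠ 0 := by rintro rfl; simp at hw
  rw [totalDegree_mul_of_isDomain hp hr, totalDegree_mul_of_isDomain (left_ne_zero_of_mul hw)
    (right_ne_zero_of_mul hw), (isUnit_iff_totalDegree_of_isReduced.1 hunit).2] at hdeg
  have := hφ r
  exact isUnit_of_ne_zero_of_totalDegree_eq_zero hp (by lia)

theorem associated_of_isRelPrime_of_totalDegree_le {D S S₀ : MvPolynomial σ K} {k m : ℕ}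
    (hD : D ≠ 0) (hS₀ : S₀ ≠ 0) (hrel : IsRelPrime S₀ D) (heq : S * D ^ k = S₀ * D ^ m)
    (hdeg : S.totalDegree ≤ S₀.totalDegree) : Associated S₀ S := by
  rcases lt_or_ge m k with hmk | hkm
  · obtain ⟨t, rfl⟩ := Nat.exists_eq_add_of_lt hmk
    have hS₀' : S * D ^ (t + 1) = S₀ := by
      apply mul_right_cancel₀ (pow_ne_zero m hD)
      rw [← heq]
      ring
    have hunit : IsUnit D :=
      hrel (by rw [← hS₀', pow_succ, ← mul_assoc]; exact dvd_mul_left _ _) dvd_rfl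
    rw [← hS₀']
    exact associated_mul_unit_left _ _ (hunit.pow _)
  · obtain ⟨t, rfl⟩ := Nat.exists_eq_add_of_le hkm
    have hS : S = S₀ * D ^ t := by
      apply mul_right_cancel₀ (pow_ne_zero k hD)
      rw [heq]
      ring
    have hDt := pow_ne_zero t hD
    rw [hS, totalDegree_mul_of_isDomain hS₀ hDt] at hdeg
    rw [hS]
    exact (associated_mul_unit_left _ _
      (isUnit_of_ne_zero_of_totalDegree_eq_zero hDt (by lia))).symm

theorem exists_sq_eq_of_associated_sq [IsAlgClosed K] {g S : MvPolynomial σ K}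
    (h : Associated (g ^ 2) S) : ∃ u : K, u ≠ 0 ∧ S = (C u * g) ^ 2 := by
  obtain ⟨v, rfl⟩ := h
  obtain ⟨r, hr, hv⟩ := isUnit_iff_eq_C_of_isReduced.1 v.isUnit
  obtain ⟨u, rfl⟩ := IsAlgClosed.exists_pow_nat_eq r two_pos
  refine ⟨u, ne_zero_of_dvd_ne_zero hr.ne_zero (dvd_pow_self u two_ne_zero), ?_⟩
  rw [hv, C_pow]
  ring

end TotalDegree

section MonomialValues

variable {M M' F : Type*} [CommMonoid M] [CommMonoid M'] {n d : ℕ}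

/-- The value `y^τ` at a point `y` of the monomial indexed by `τ`. -/
def monVal (y : Fin n → M) (τ : MonIdx n d) : M :=
  ∏ j, y j ^ monExp τ j

theorem map_monVal [FunLike F M M'] [MonoidHomClass F M M'] (f : F) (y : Fin n → M)
    (τ : MonIdx n d) : f (monVal y τ) = monVal (fun i => f (y i)) τ := by
  simp only [monVal, map_prod, map_pow]

theorem sum_monExp (τ : MonIdx n d) : ∑ j, monExp τ j = d := by
  have h := Multiset.toFinsupp_sum_eq (τ : Multiset (Fin n))
  rwa [Finsupp.sum_fintype _ _ fun _ => rfl, Sym.card_coe] at h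

theorem monVal_const (δ : M) (τ : MonIdx n d) : monVal (fun _ => δ) τ = δ ^ d := by
  rw [monVal, Finset.prod_pow_eq_pow_sum, sum_monExp]

theorem monExp_injective : Function.Injective (monExp : MonIdx n d → Fin n →₀ ℕ) :=
  Multiset.toFinsupp.injective.comp Sym.coe_injective

theorem exists_monExp_eq {m : Fin n →₀ ℕ} (hm : m.degree = d) :
    ∃ σ : MonIdx n d, monExp σ = m :=
  ⟨⟨Finsupp.toMultiset m, (Finsupp.card_toMultiset m).trans hm⟩, Finsupp.toMultiset_toFinsupp m⟩

theorem monVal_comp_perm (y : Fin n → M) (e : Equiv.Perm (Fin n)) (τ : MonIdx n d) :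
    monVal (fun i => y (e i)) τ = monVal y (Sym.equivCongr e τ) := by
  refine Fintype.prod_equiv e _ _ fun j => ?_
  simp only [monExp, Multiset.toFinsupp_apply, Sym.equivCongr, Equiv.coe_fn_mk, Sym.coe_map]
  rw [Multiset.count_map_eq_count' _ _ e.injective]

end MonomialValues

section SymmetricPowers

open MvPolynomial

variable {R R' : Type*} [CommRing R] [CommRing R'] {n d : ℕ}

theorem monomial_monExp (σ : MonIdx n d) (r : R) :
    monomial (monExp σ) r = C r * monVal X σ := by
  rw [monomial_eq, Finsupp.prod_fintype _ _ fun _ => pow_zero _]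
  rfl

theorem monVal_X_injective [Nontrivial R] :
    Function.Injective (monVal X : MonIdx n d → MvPolynomial (Fin n) R) := by
  intro σ τ h
  rw [← one_mul (monVal X σ), ← one_mul (monVal X τ), ← C_1, ← monomial_monExp,
    ← monomial_monExp] at h
  exact monExp_injective (monomial_left_injective one_ne_zero h)

theorem eq_sum_coeff_monExp_of_isHomogeneous {f : MvPolynomial (Fin n) R}
    (hf : f.IsHomogeneous d) :
    f = ∑ σ : MonIdx n d, C (f.coeff (monExp σ)) * monVal X σ := by
  simp_rw [← monomial_monExp]
  ext m
  simp_rw [coeff_sum, coeff_monomial]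
  by_cases hm : m.degree = d
  · obtain ⟨σ, rfl⟩ := exists_monExp_eq hm
    simp [monExp_injective.eq_iff]
  · rw [hf.coeff_eq_zero hm, Finset.sum_eq_zero]
    rintro σ -
    refine if_neg ?_
    rintro rfl
    exact hm ((Finsupp.degree_eq_sum _).trans (sum_monExp σ))

/-- The `j`-th coordinate of `A · x`, as a linear form in `x`. -/
def linForm (A : Matrix (Fin n) (Fin n) R) (j : Fin n) : MvPolynomial (Fin n) R :=
  ∑ k, C (A j k) * X k

theorem symPow_apply (A : Matrix (Fin n) (Fin n) R) (τ σ : MonIdx n d) :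
    symPow d A τ σ = (monVal (linForm A) τ).coeff (monExp σ) := rfl

theorem isHomogeneous_monVal_linForm (A : Matrix (Fin n) (Fin n) R) (τ : MonIdx n d) :
    (monVal (linForm A) τ).IsHomogeneous d := by
  have homog_linForm (j : Fin n) : (linForm A j).IsHomogeneous 1 :=
    .sum _ _ _ fun k _ => isHomogeneous_C_mul_X (A j k) k
  have h := IsHomogeneous.prod Finset.univ _ _ fun j _ => (homog_linForm j).pow (monExp τ j)
  simpa only [monVal, one_mul, sum_monExp] using h

theorem aeval_linForm_linForm (A B : Matrix (Fin n) (Fin n) R) (j : Fin n) :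
    aeval (linForm B) (linForm A j) = linForm (A * B) j := by
  simp only [linForm, map_sum, map_mul, aeval_C, aeval_X, algebraMap_eq, Matrix.mul_apply,
    Finset.mul_sum, Finset.sum_mul, mul_assoc]
  exact Finset.sum_comm

theorem symPow_mul (A B : Matrix (Fin n) (Fin n) R) :
    symPow d (A * B) = symPow d A * symPow d B := by
  ext τ σ
  have substitution : monVal (linForm (A * B)) τ =
      ∑ ρ, C (symPow d A τ ρ) * monVal (linForm B) ρ := by
    calc monVal (linForm (A * B)) τ = aeval (linForm B) (monVal (linForm A) τ) := by
          simp only [map_monVal, aeval_linForm_linForm]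
      _ = ∑ ρ, C (symPow d A τ ρ) * monVal (linForm B) ρ := by
          rw [eq_sum_coeff_monExp_of_isHomogeneous (isHomogeneous_monVal_linForm A τ)]
          simp only [map_sum, map_mul, map_monVal, aeval_X, aeval_C, algebraMap_eq, symPow_apply]
  rw [symPow_apply, substitution, coeff_sum, Matrix.mul_apply]
  simp only [coeff_C_mul, symPow_apply]

theorem map_symPow (f : R →+* R') (A : Matrix (Fin n) (Fin n) R) :
    (symPow d A).map f = symPow d (A.map f) := by
  ext τ σ
  rw [Matrix.map_apply, symPow_apply, symPow_apply, ← coeff_map, map_monVal]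
  simp only [linForm, map_sum, map_mul, map_C, map_X]
  rfl

theorem symPow_diagonal (x : Fin n → R) :
    symPow d (Matrix.diagonal x) = Matrix.diagonal (monVal x) := by
  ext τ σ
  have linForm_diagonal : linForm (Matrix.diagonal x) = fun j => C (x j) * X j := by
    funext j
    simp [linForm, Matrix.diagonal_apply, apply_ite C]
  have monVal_scaled : monVal (fun j => C (x j) * X j) τ = monomial (monExp τ) (monVal x τ) := by
    simp only [monomial_monExp, monVal, mul_pow, Finset.prod_mul_distrib, map_prod, map_pow]
  rw [symPow_apply, linForm_diagonal, monVal_scaled, coeff_monomial, Matrix.diagonal_apply]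
  simp only [monExp_injective.eq_iff]

theorem det_symPow_smul_one (δ : R) :
    (symPow d (δ • (1 : Matrix (Fin n) (Fin n) R))).det =
      δ ^ (d * Fintype.card (MonIdx n d)) := by
  rw [Matrix.smul_one_eq_diagonal, symPow_diagonal, Matrix.det_diagonal]
  simp only [monVal_const, Finset.prod_const, Finset.card_univ, ← pow_mul]

theorem det_symPow_dvd (A : Matrix (Fin n) (Fin n) R) :
    (symPow d A).det ∣ A.det ^ (d * Fintype.card (MonIdx n d)) := by
  rw [← det_symPow_smul_one, ← Matrix.mul_adjugate, symPow_mul, Matrix.det_mul]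
  exact dvd_mul_right _ _

end SymmetricPowers

section Vandermonde

open Matrix

variable {ι R R' : Type*} [Fintype ι] [DecidableEq ι] [CommRing R] [CommRing R']

/-- The Krylov matrix with rows `c, cM, cM², …`, indexed through the enumeration
`Fintype.equivFin ι` that the Kalman matrix `kalmanSq` also uses. -/
def krylov (c : ι → R) (M : Matrix ι ι R) : Matrix ι ι R :=
  .of fun σ => c ᵥ* M ^ (Fintype.equivFin ι σ : ℕ)

theorem mul_pow_eq_pow_mul_of_mul_eq_mul {Q M N : Matrix ι ι R} (h : Q * M = N * Q) (k : ℕ) :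
    Q * M ^ k = N ^ k * Q :=
  (SemiconjBy.pow_right (show SemiconjBy Q M N from h) k).eq

theorem krylov_vecMul {Q M N : Matrix ι ι R} (h : Q * M = N * Q) (c : ι → R) :
    krylov (c ᵥ* Q) M = krylov c N * Q := by
  refine funext fun σ => ?_
  calc (c ᵥ* Q) ᵥ* M ^ (Fintype.equivFin ι σ : ℕ)
      = c ᵥ* N ^ (Fintype.equivFin ι σ : ℕ) ᵥ* Q := by
        rw [vecMul_vecMul, vecMul_vecMul, mul_pow_eq_pow_mul_of_mul_eq_mul h]
    _ = (krylov c N * Q) σ := (mul_apply_eq_vecMul _ _ _).symm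

theorem map_krylov (f : R →+* R') (c : ι → R) (M : Matrix ι ι R) :
    (krylov c M).map f = krylov (fun i => f (c i)) (M.map f) := by
  ext σ τ
  have map_power := map_pow f.mapMatrix M (Fintype.equivFin ι σ)
  simp only [RingHom.mapMatrix_apply] at map_power
  simp only [krylov, map_apply, of_apply, ← map_power]
  exact RingHom.map_vecMul f _ c τ

theorem krylov_smul (r : R) (c : ι → R) (M : Matrix ι ι R) :
    krylov (r • c) M = r • krylov c M :=
  funext fun _ => smul_vecMul r c _

/-- The Vandermonde determinant of a family indexed by an arbitrary finite type, with rows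
enumerated by `Fintype.equivFin ι`. -/
def vdm (v : ι → R) : R :=
  (krylov 1 (diagonal v)).det

theorem krylov_one_diagonal_apply (v : ι → R) (σ τ : ι) :
    krylov 1 (diagonal v) σ τ = v τ ^ (Fintype.equivFin ι σ : ℕ) := by
  simp [krylov, diagonal_pow, vecMul_diagonal]

theorem det_krylov_diagonal (c v : ι → R) :
    (krylov c (diagonal v)).det = vdm v * ∏ i, c i := by
  have one_vecMul_diagonal : (1 : ι → R) ᵥ* diagonal c = c := by
    ext i
    simp [vecMul_diagonal]
  rw [← one_vecMul_diagonal, krylov_vecMul (commute_diagonal c v).eq, det_mul, det_diagonal,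
    one_vecMul_diagonal, vdm]

theorem map_vdm {F : Type*} [FunLike F R R'] [RingHomClass F R R'] (f : F) (v : ι → R) :
    f (vdm v) = vdm (fun i => f (v i)) := by
  rw [vdm, vdm, ← RingHom.coe_coe f, RingHom.map_det, RingHom.mapMatrix_apply]
  congr 1
  ext σ τ
  simp [krylov_one_diagonal_apply]

theorem vdm_eq_det_vandermonde (v : ι → R) :
    vdm v = (vandermonde fun i => v ((Fintype.equivFin ι).symm i)).det := by
  rw [vdm, ← det_transpose, ← det_reindex_self (Fintype.equivFin ι)]
  congr 1
  ext i j
  simp [krylov_one_diagonal_apply]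

theorem det_vandermonde_comp_equiv_sq {n : ℕ} (v : ι → R) (e : Fin n ≃ ι) :
    (vandermonde fun i => v (e i)).det ^ 2 = vdm v ^ 2 := by
  obtain rfl : Fintype.card ι = n := by simpa using (Fintype.card_congr e).symm
  set π : Equiv.Perm (Fin (Fintype.card ι)) := e.trans (Fintype.equivFin ι)
  have permuted : (vandermonde fun i => v (e i)) =
      (vandermonde fun i => v ((Fintype.equivFin ι).symm i)).submatrix π id := by
    ext i j
    simp [π, vandermonde_apply]
  rw [permuted, det_permute, ← vdm_eq_det_vandermonde, mul_pow, ← Int.cast_pow,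
    ← Units.val_pow_eq_pow_val, Int.units_sq, Units.val_one, Int.cast_one, one_mul]

theorem vdm_sq_comp_perm (v : ι → R) (e : Equiv.Perm ι) :
    vdm (fun i => v (e i)) ^ 2 = vdm v ^ 2 := by
  rw [vdm_eq_det_vandermonde]
  exact det_vandermonde_comp_equiv_sq v ((Fintype.equivFin ι).symm.trans e)

theorem vdm_ne_zero_iff [IsDomain R] {v : ι → R} : vdm v ≠ 0 ↔ Function.Injective v := by
  rw [vdm_eq_det_vandermonde, det_vandermonde_ne_zero_iff]
  exact Equiv.injective_comp (Fintype.equivFin ι).symm v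

theorem vdm_eq_prod (v : ι → R) :
    vdm v = ∏ p : ι × ι with Fintype.equivFin ι p.1 < Fintype.equivFin ι p.2, (v p.2 - v p.1) := by
  rw [vdm_eq_det_vandermonde, det_vandermonde, Finset.prod_filter, Fintype.prod_prod_type,
    ← (Fintype.equivFin ι).symm.prod_comp]
  refine Finset.prod_congr rfl fun i _ => ?_
  rw [← Finset.filter_lt_eq_Ioi, Finset.prod_filter, ← (Fintype.equivFin ι).symm.prod_comp]
  simp only [Equiv.apply_symm_apply]

theorem sub_dvd_vdm (v : ι → R) {i j : ι} (hij : i ≠ j) : v i - v j ∣ vdm v := by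
  have pair_dvd {a b : ι} (hab : Fintype.equivFin ι a < Fintype.equivFin ι b) :
      v b - v a ∣ vdm v := by
    rw [vdm_eq_prod]
    exact Finset.dvd_prod_of_mem (fun p : ι × ι => v p.2 - v p.1) (a := (a, b)) (by simp [hab])
  rcases ((Fintype.equivFin ι).injective.ne hij).lt_or_gt with h | h
  · rw [← neg_sub, neg_dvd]
    exact pair_dvd h
  · exact pair_dvd h

end Vandermonde

section Intertwiners

open Matrix Polynomial

variable {ι R : Type*} [Fintype ι] [DecidableEq ι] [CommRing R]

/-- The numerator of the `i`-th Lagrange basis polynomial at the nodes `y`: up to a scalar, its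
value at a matrix with spectrum `y` is the projection onto the `i`-th eigenspace. -/
def lagrangeNumerator (y : ι → R) (i : ι) : R[X] :=
  ∏ j ∈ Finset.univ.erase i, (X - C (y j))

theorem natDegree_lagrangeNumerator_lt (y : ι → R) (i : ι) :
    (lagrangeNumerator y i).natDegree < Fintype.card ι := by
  calc (lagrangeNumerator y i).natDegree ≤ ∑ _j ∈ Finset.univ.erase i, 1 :=
        (natDegree_prod_le _ _).trans (Finset.sum_le_sum fun j _ => natDegree_X_sub_C_le (y j))
    _ = (Finset.univ.erase i).card := (Finset.card_eq_sum_ones _).symm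
    _ < Fintype.card ι := Finset.card_erase_lt_of_mem (Finset.mem_univ i)

theorem lagrangeNumerator_mul (y : ι → R) (i : ι) :
    lagrangeNumerator y i * (X - C (y i)) = ∏ j, (X - C (y j)) :=
  Finset.prod_erase_mul _ _ (Finset.mem_univ i)

theorem eval_lagrangeNumerator_of_ne (y : ι → R) {i j : ι} (hij : j ≠ i) :
    (lagrangeNumerator y i).eval (y j) = 0 := by
  rw [lagrangeNumerator, eval_prod]
  exact Finset.prod_eq_zero (Finset.mem_erase.2 ⟨hij, Finset.mem_univ j⟩) (by simp)

theorem eval_lagrangeNumerator_self_dvd (y : ι → R) (i : ι) :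
    (lagrangeNumerator y i).eval (y i) ∣ vdm y ^ Fintype.card ι := by
  rw [lagrangeNumerator, eval_prod]
  refine (Finset.prod_dvd_prod_of_dvd _ (fun _ => vdm y) fun j hj => ?_).trans ?_
  · rw [eval_sub, eval_X, eval_C]
    exact sub_dvd_vdm y (Finset.ne_of_mem_erase hj).symm
  · rw [Finset.prod_const]
    exact pow_dvd_pow _ (Finset.card_le_univ _)

/-- The matrix whose row `i` is `(1, …, 1) ∏_{j ≠ i} (M - y_j)`: by the Cayley–Hamilton theorem
this is a left eigenvector of `M` when the `y_i` are the roots of its characteristic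
polynomial. -/
def eigenRows (y : ι → R) (M : Matrix ι ι R) : Matrix ι ι R :=
  .of fun i => 1 ᵥ* aeval M (lagrangeNumerator y i)

theorem eigenRows_mul {M : Matrix ι ι R} {y : ι → R} (hy : M.charpoly = ∏ i, (X - C (y i))) :
    eigenRows y M * M = diagonal y * eigenRows y M := by
  refine funext fun i => ?_
  have hM : aeval M (lagrangeNumerator y i) * M = y i • aeval M (lagrangeNumerator y i) := by
    have h := aeval_self_charpoly M
    rw [hy, ← lagrangeNumerator_mul y i, map_mul, map_sub, aeval_X, aeval_C, mul_sub,
      ← Algebra.commutes, ← Algebra.smul_def] at h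
    exact sub_eq_zero.1 h
  calc (eigenRows y M * M) i = 1 ᵥ* (aeval M (lagrangeNumerator y i) * M) := by
        rw [mul_apply_eq_vecMul, ← vecMul_vecMul]
        rfl
    _ = y i • eigenRows y M i := by
        rw [hM, vecMul_smul]
        rfl
    _ = (diagonal y * eigenRows y M) i := by
        ext j
        simp [diagonal_mul]

theorem eigenRows_eq_mul_krylov (y : ι → R) (M : Matrix ι ι R) :
    eigenRows y M =
      of (fun i k => (lagrangeNumerator y i).coeff (Fintype.equivFin ι k)) * krylov 1 M := by
  refine funext fun i => ?_
  have expand : aeval M (lagrangeNumerator y i) = ∑ k : ι,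
      (lagrangeNumerator y i).coeff (Fintype.equivFin ι k) • M ^ (Fintype.equivFin ι k : ℕ) := by
    rw [aeval_eq_sum_range' (natDegree_lagrangeNumerator_lt y i), Finset.sum_range]
    exact ((Fintype.equivFin ι).sum_comp fun k : Fin _ =>
      (lagrangeNumerator y i).coeff k • M ^ (k : ℕ)).symm
  ext j
  simp [eigenRows, expand, krylov, mul_apply, vecMul_sum, vecMul_smul]

theorem eigenRows_diagonal (y : ι → R) :
    eigenRows y (diagonal y) = diagonal fun i => (lagrangeNumerator y i).eval (y i) := by
  ext i j
  have aeval_diagonal : aeval (diagonal y) (lagrangeNumerator y i) =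
      diagonal fun j => (lagrangeNumerator y i).eval (y j) := by
    rw [← diagonalAlgHom_apply (R := R), aeval_algHom_apply, diagonalAlgHom_apply]
    congr 1
    ext j
    simp [coe_aeval_eq_eval]
  rw [eigenRows, of_apply, aeval_diagonal, vecMul_diagonal, Pi.one_apply, one_mul, diagonal_apply]
  split_ifs with hij
  · rw [hij]
  · exact eval_lagrangeNumerator_of_ne y (Ne.symm hij)

/-- Comparing `M` with `diagonal y`, whose Krylov determinant is `vdm y`, bounds the determinant
of the transition matrix. -/
theorem det_eigenRows_dvd (y : ι → R) (M : Matrix ι ι R) :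
    (eigenRows y M).det ∣
      (vdm y ^ Fintype.card ι) ^ Fintype.card ι * (krylov 1 M).det := by
  rw [eigenRows_eq_mul_krylov, det_mul]
  refine mul_dvd_mul_right ?_ _
  calc _ ∣ _ * vdm y := dvd_mul_right _ _
    _ = ∏ i, (lagrangeNumerator y i).eval (y i) := by
        rw [vdm, ← det_mul, ← eigenRows_eq_mul_krylov, eigenRows_diagonal, det_diagonal]
    _ ∣ ∏ _i : ι, vdm y ^ Fintype.card ι :=
        Finset.prod_dvd_prod_of_dvd _ _ fun i _ => eval_lagrangeNumerator_self_dvd y i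
    _ = (vdm y ^ Fintype.card ι) ^ Fintype.card ι := by rw [Finset.prod_const, Finset.card_univ]

theorem vdm_dvd_det_pow_mul_det_krylov {Q M : Matrix ι ι R} {z : ι → R}
    (h : Q * M = diagonal z * Q) (c : ι → R) :
    vdm z ∣ Q.det ^ Fintype.card ι * (krylov c M).det := by
  have hc : (c ᵥ* Q.adjugate) ᵥ* Q = Q.det • c := by
    rw [vecMul_vecMul, adjugate_mul, vecMul_smul, vecMul_one]
  rw [← det_smul, ← krylov_smul, ← hc, krylov_vecMul h, det_mul, det_krylov_diagonal, mul_assoc]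
  exact dvd_mul_right _ _

theorem charpoly_eq_of_mul_eq_mul [IsDomain R] {Q M N : Matrix ι ι R} (hQ : Q.det ≠ 0)
    (h : Q * M = N * Q) : M.charpoly = N.charpoly := by
  have hQX : (Q.map C).det ≠ 0 := by
    rw [← RingHom.mapMatrix_apply, ← RingHom.map_det]
    exact C_ne_zero.2 hQ
  have intertwines : Q.map C * charmatrix M = charmatrix N * Q.map C := by
    simp only [charmatrix, mul_sub, sub_mul, RingHom.mapMatrix_apply, ← Matrix.map_mul, h,
      (scalar_commute X (Commute.all X) (Q.map C)).eq]
  apply mul_left_cancel₀ hQX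
  rw [charpoly, charpoly, ← det_mul, intertwines, det_mul, mul_comm]

theorem trace_eq_of_mul_eq_mul [IsDomain R] {Q M N : Matrix ι ι R} (hQ : Q.det ≠ 0)
    (h : Q * M = N * Q) : M.trace = N.trace := by
  rw [trace_eq_neg_charpoly_nextCoeff, trace_eq_neg_charpoly_nextCoeff,
    charpoly_eq_of_mul_eq_mul hQ h]

/-- The Hankel matrix of the traces of the powers of `M`. -/
def traceHankel (M : Matrix ι ι R) : Matrix ι ι R :=
  .of fun σ τ => (M ^ (Fintype.equivFin ι σ + Fintype.equivFin ι τ : ℕ)).trace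

theorem map_traceHankel {R' : Type*} [CommRing R'] (f : R →+* R') (M : Matrix ι ι R) :
    (traceHankel M).map f = traceHankel (M.map f) := by
  ext σ τ
  simp only [traceHankel, map_apply, of_apply, ← RingHom.mapMatrix_apply, ← map_pow]
  exact AddMonoidHom.map_trace f _

theorem det_traceHankel_of_mul_eq_diagonal_mul [IsDomain R] {Q M : Matrix ι ι R} {y : ι → R}
    (hQ : Q.det ≠ 0) (h : Q * M = diagonal y * Q) : (traceHankel M).det = vdm y ^ 2 := by
  have factorization : traceHankel M = krylov 1 (diagonal y) * (krylov 1 (diagonal y))ᵀ := by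
    ext σ τ
    rw [traceHankel, of_apply, trace_eq_of_mul_eq_mul hQ (mul_pow_eq_pow_mul_of_mul_eq_mul h _)]
    simp [mul_apply, krylov_one_diagonal_apply, diagonal_pow, trace_diagonal, pow_add]
  rw [factorization, det_mul, det_transpose, ← vdm, sq]

end Intertwiners

section SymmetricFactor

open MvPolynomial

variable {σ R : Type*} [CommRing R]

theorem X_sub_X_dvd_sub_rename [DecidableEq σ] (i j : σ) (p : MvPolynomial σ R) :
    (X i - X j) ∣ p - rename (Function.update id j i) p := by
  induction p using MvPolynomial.induction_on with
  | C a => simp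
  | add p q hp hq =>
    rw [map_add, add_sub_add_comm]
    exact dvd_add hp hq
  | mul_X p k hp =>
    have hk : (X i - X j : MvPolynomial σ R) ∣ X k - X (Function.update id j i k) := by
      obtain rfl | hkj := eq_or_ne k j
      · rw [Function.update_self, ← neg_sub, neg_dvd]
      · simp [Function.update_of_ne hkj]
    rw [map_mul, rename_X]
    exact dvd_mul_sub_mul hp hk

theorem X_sub_X_dvd_iff [DecidableEq σ] {i j : σ} (hij : i ≠ j) {p : MvPolynomial σ R} :
    (X i - X j) ∣ p ↔ rename (Function.update id j i) p = 0 := by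
  refine ⟨?_, fun h => ?_⟩
  · rintro ⟨q, rfl⟩
    simp [Function.update_of_ne hij]
  · simpa only [h, sub_zero] using X_sub_X_dvd_sub_rename i j p

theorem prime_X_sub_X [IsDomain R] {i j : σ} (hij : i ≠ j) :
    Prime (X i - X j : MvPolynomial σ R) := by
  classical
  refine ⟨sub_ne_zero.2 fun h => hij (X_injective h), fun h => ?_, fun a b h => ?_⟩
  · rw [isUnit_iff_dvd_one, X_sub_X_dvd_iff hij, map_one] at h
    exact one_ne_zero h
  · rwa [X_sub_X_dvd_iff hij, map_mul, mul_eq_zero, ← X_sub_X_dvd_iff hij,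
      ← X_sub_X_dvd_iff hij] at h

theorem X_sub_X_dvd_X_sub_X [Nontrivial R] {i j k l : σ} (hij : i ≠ j)
    (h : (X i - X j : MvPolynomial σ R) ∣ X k - X l) (hkl : k ≠ l) :
    (i = k ∧ j = l) ∨ (i = l ∧ j = k) := by
  classical
  rw [X_sub_X_dvd_iff hij, map_sub, rename_X, rename_X, sub_eq_zero] at h
  have identified := X_injective h
  simp only [Function.update_apply, id] at identified
  grind

theorem isSymmetric_vdm_X_sq [Fintype σ] [DecidableEq σ] :
    (vdm (X : σ → MvPolynomial σ R) ^ 2).IsSymmetric := by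
  intro e
  simp only [map_pow, map_vdm, rename_X]
  exact vdm_sq_comp_perm X e

variable [IsDomain R]

theorem isRelPrime_vdm_X [UniqueFactorizationMonoid R] [Fintype σ] [DecidableEq σ]
    {P : MvPolynomial σ R} (h : ∀ i j, i ≠ j → ¬ (X i - X j) ∣ P) : IsRelPrime P (vdm X) := by
  rw [vdm_eq_prod]
  refine IsRelPrime.prod_right fun p hp => ?_
  have hne : p.2 ≠ p.1 := by
    rintro heq
    simp [heq] at hp
  exact ((prime_X_sub_X hne).irreducible.isRelPrime_iff_not_dvd.2 (h _ _ hne)).symm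

theorem vdm_X_dvd [UniqueFactorizationMonoid R] [Fintype σ] [DecidableEq σ] {P : MvPolynomial σ R}
    (h : ∀ i j, i ≠ j → (X i - X j) ∣ P) : vdm X ∣ P := by
  have ne_of_lt {p : σ × σ} (hp : Fintype.equivFin σ p.1 < Fintype.equivFin σ p.2) :
      p.2 ≠ p.1 := by
    rintro heq
    simp [heq] at hp
  rw [vdm_eq_prod]
  refine Finset.prod_dvd_of_isRelPrime (fun p hp q hq hpq => ?_) fun p hp =>
    h _ _ (ne_of_lt (Finset.mem_filter.1 hp).2)
  replace hp := (Finset.mem_filter.1 hp).2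
  replace hq := (Finset.mem_filter.1 hq).2
  refine (prime_X_sub_X (ne_of_lt hp)).irreducible.isRelPrime_iff_not_dvd.2 fun hdvd => ?_
  rcases X_sub_X_dvd_X_sub_X (ne_of_lt hp) hdvd (ne_of_lt hq) with ⟨h2, h1⟩ | ⟨h2, h1⟩
  · exact hpq (Prod.ext h1 h2)
  · rw [h1, h2] at hp
    exact lt_asymm hp hq

theorem X_sub_X_dvd_of_isSymmetric_sq {P : MvPolynomial σ R} (hP : (P ^ 2).IsSymmetric)
    {i j k l : σ} (hij : i ≠ j) (hkl : k ≠ l) (h : (X i - X j) ∣ P) : (X k - X l) ∣ P := by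
  obtain ⟨e, rfl, rfl⟩ := (MulAction.is_two_pretransitive_iff (G := Equiv.Perm σ)).1
    (Equiv.Perm.isMultiplyPretransitive σ 2) hij hkl
  have hrename : rename e (X i - X j) ∣ rename e P := map_dvd (rename e) h
  rw [map_sub, rename_X, rename_X] at hrename
  refine (prime_X_sub_X hkl).dvd_of_dvd_pow (n := 2) ?_
  rw [← hP e, map_pow]
  exact dvd_pow hrename two_ne_zero

/-- If a transposition changed the sign of `P`, then `P` would vanish where the two variables
agree. -/
theorem rename_swap_eq_self_of_isSymmetric_sq [DecidableEq σ] [CharZero R] {P : MvPolynomial σ R}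
    (hP : (P ^ 2).IsSymmetric) {i j : σ} (hij : i ≠ j) (h : ¬ (X i - X j) ∣ P) :
    rename (Equiv.swap i j) P = P := by
  have hsq : rename (Equiv.swap i j) P ^ 2 = P ^ 2 := by rw [← map_pow, hP]
  refine (sq_eq_sq_iff_eq_or_eq_neg.1 hsq).resolve_right fun hneg => h ?_
  have identify_swap : Function.update id j i ∘ Equiv.swap i j = Function.update id j i := by
    funext k
    simp only [Function.comp_apply, Function.update_apply, id, Equiv.swap_apply_def]
    grind
  have hself := congrArg (rename (Function.update id j i)) hneg
  rw [rename_rename, identify_swap, map_neg] at hself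
  exact (X_sub_X_dvd_iff hij).2 (self_eq_neg.1 hself)

theorem isSymmetric_of_isSymmetric_sq [Finite σ] [CharZero R] {P : MvPolynomial σ R}
    (hP : (P ^ 2).IsSymmetric) (h : ∀ i j, i ≠ j → ¬ (X i - X j) ∣ P) : P.IsSymmetric := by
  classical
  intro e
  induction e using Equiv.Perm.swap_induction_on with
  | one => exact rename_id_apply P
  | swap_mul f i j hij ih =>
    rw [Equiv.Perm.coe_mul, ← rename_rename, ih,
      rename_swap_eq_self_of_isSymmetric_sq hP hij (h i j hij)]

theorem exists_eq_vdm_X_pow_mul_isSymmetric [Fintype σ] [DecidableEq σ] [CharZero R]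
    [UniqueFactorizationMonoid R] {F : MvPolynomial σ R} (hF : F ≠ 0)
    (hsymm : (F ^ 2).IsSymmetric) :
    ∃ (m : ℕ) (P : MvPolynomial σ R),
      F = vdm X ^ m * P ∧ P.IsSymmetric ∧ IsRelPrime P (vdm X) := by
  obtain hσ | hσ := subsingleton_or_nontrivial σ
  · have no_pair (i j : σ) (hij : i ≠ j) : ¬ (X i - X j) ∣ F := (hij (Subsingleton.elim i j)).elim
    exact ⟨0, F, by rw [pow_zero, one_mul], isSymmetric_of_isSymmetric_sq hsymm no_pair,
      isRelPrime_vdm_X no_pair⟩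
  obtain ⟨i₀, j₀, hij₀⟩ := exists_pair_ne σ
  have not_isUnit : ¬ IsUnit (vdm (X : σ → MvPolynomial σ R)) := fun h =>
    (prime_X_sub_X hij₀).not_isUnit (isUnit_of_dvd_unit (sub_dvd_vdm X hij₀) h)
  obtain ⟨m, P, hP, rfl⟩ := WfDvdMonoid.max_power_factor' hF not_isUnit
  have hPsq : (P ^ 2).IsSymmetric := by
    intro e
    have h := hsymm e
    rw [mul_pow, ← pow_mul, mul_comm m, pow_mul, map_mul, map_pow, isSymmetric_vdm_X_sq e] at h
    exact mul_left_cancel₀ (pow_ne_zero _ (pow_ne_zero 2 (vdm_ne_zero_iff.2 X_injective))) h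
  have no_pair (i j : σ) (hij : i ≠ j) : ¬ (X i - X j) ∣ P := fun h =>
    hP (vdm_X_dvd fun k l hkl => X_sub_X_dvd_of_isSymmetric_sq hPsq hij hkl h)
  exact ⟨m, P, rfl, isSymmetric_of_isSymmetric_sq hPsq no_pair, isRelPrime_vdm_X no_pair⟩

theorem exists_vdm_monVal_X_eq {n : ℕ} (d : ℕ) [CharZero R] [UniqueFactorizationMonoid R] :
    ∃ (m : ℕ) (P : symmetricSubalgebra (Fin n) R),
      vdm (monVal X : MonIdx n d → MvPolynomial (Fin n) R) =
        vdm X ^ m * (P : MvPolynomial (Fin n) R) ∧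
      IsRelPrime (P : MvPolynomial (Fin n) R) (vdm X) := by
  have hsymm : (vdm (monVal X : MonIdx n d → MvPolynomial (Fin n) R) ^ 2).IsSymmetric := fun e => by
    simp only [map_pow, map_vdm, map_monVal, rename_X, monVal_comp_perm]
    exact vdm_sq_comp_perm (monVal X) (Sym.equivCongr e)
  obtain ⟨m, P, hP, hPsymm, hrel⟩ :=
    exists_eq_vdm_X_pow_mul_isSymmetric (vdm_ne_zero_iff.2 monVal_X_injective) hsymm
  exact ⟨m, ⟨P, hPsymm⟩, hP, hrel⟩

end SymmetricFactor

section DiscriminantsAsVandermondeSquares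

open Matrix

theorem exists_equiv_of_univ_val_map_eq {ι κ α : Type*} [Fintype ι] [Fintype κ]
    {v : ι → α} {w : κ → α}
    (h : Finset.univ.val.map v = Finset.univ.val.map w) : ∃ e : ι ≃ κ, ∀ i, w (e i) = v i := by
  classical
  have card_fiber (a : α) : Fintype.card {i // v i = a} = Fintype.card {k // w k = a} := by
    have hcount := congrArg (Multiset.count a) h
    simp only [Multiset.count_map, eq_comm (a := a)] at hcount
    simp only [Fintype.card_subtype]
    exact hcount
  exact ⟨.ofFiberEquiv fun a => Fintype.equivOfCardEq (card_fiber a), Equiv.ofFiberEquiv_map _⟩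

theorem listPairProdSq_eq_det_vandermonde_sq (l : List ℂ) :
    listPairProdSq l = (vandermonde l.get).det ^ 2 := by
  rw [listPairProdSq, det_vandermonde, ← Finset.prod_pow, Finset.prod_filter,
    Fintype.prod_prod_type]
  refine Finset.prod_congr rfl fun i _ => ?_
  rw [← Finset.filter_lt_eq_Ioi, ← Finset.prod_pow, Finset.prod_filter]
  exact Finset.prod_congr rfl fun j _ => by rw [sub_sq_comm]

variable {ι : Type*} [Fintype ι] [DecidableEq ι]

theorem pairProdSq_univ_val_map (v : ι → ℂ) :
    pairProdSq (Finset.univ.val.map v) = vdm v ^ 2 := by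
  set l := (Finset.univ.val.map v).toList
  have hl : Finset.univ.val.map l.get = Finset.univ.val.map v := by
    rw [Fin.univ_val_map, List.ofFn_get, Multiset.coe_toList]
  obtain ⟨e, he⟩ := exists_equiv_of_univ_val_map_eq hl
  rw [← det_vandermonde_comp_equiv_sq v e, funext he, ← listPairProdSq_eq_det_vandermonde_sq]
  rfl

theorem pairProdSq_roots_charpoly_of_mul_eq_diagonal_mul {Q M : Matrix ι ι ℂ} {y : ι → ℂ}
    (hQ : Q.det ≠ 0) (h : Q * M = diagonal y * Q) :
    pairProdSq M.charpoly.roots = vdm y ^ 2 := by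
  have roots_eq : M.charpoly.roots = Finset.univ.val.map y := by
    rw [charpoly_eq_of_mul_eq_mul hQ h, charpoly_diagonal,
      ← Polynomial.roots_multiset_prod_X_sub_C (Finset.univ.val.map y), Multiset.map_map]
    rfl
  rw [roots_eq, pairProdSq_univ_val_map]

end DiscriminantsAsVandermondeSquares

section Evaluation

open MvPolynomial Matrix

variable {n : ℕ} {T : Type*} [CommRing T] [Algebra ℂ T]

/-- Evaluation of a polynomial in the entries of the generic matrix at a matrix over a
`ℂ`-algebra. -/
def evalMat (B : Matrix (Fin n) (Fin n) T) : MvPolynomial (Fin n × Fin n) ℂ →ₐ[ℂ] T :=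
  aeval fun ij => B ij.1 ij.2

theorem evalMat_eq_eval (B : Matrix (Fin n) (Fin n) ℂ) (p : MvPolynomial (Fin n × Fin n) ℂ) :
    evalMat B p = eval (fun ij => B ij.1 ij.2) p :=
  congrFun (aeval_eq_eval _) p

theorem map_genMat_evalMat (B : Matrix (Fin n) (Fin n) T) :
    (genMat n).map (evalMat B : _ →+* T) = B := by
  ext i j
  simp [genMat, evalMat]

theorem evalMat_map_genMat (f : MvPolynomial (Fin n × Fin n) ℂ →ₐ[ℂ] T) :
    evalMat ((genMat n).map f) = f :=
  algHom_ext fun ij => by simp [genMat, evalMat]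

theorem evalMat_det_krylov_genMat (B : Matrix (Fin n) (Fin n) T) :
    evalMat B (krylov 1 (genMat n)).det = (krylov 1 B).det := by
  rw [← RingHom.coe_coe (evalMat B), RingHom.map_det, RingHom.mapMatrix_apply, map_krylov,
    map_genMat_evalMat]
  simp only [Pi.one_apply, map_one]
  rfl

theorem evalMat_det_traceHankel_genMat (B : Matrix (Fin n) (Fin n) T) :
    evalMat B (traceHankel (genMat n)).det = (traceHankel B).det := by
  rw [← RingHom.coe_coe (evalMat B), RingHom.map_det, RingHom.mapMatrix_apply, map_traceHankel,
    map_genMat_evalMat]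

/-- The elementary symmetric functions of the eigenvalues of `B`, as signed coefficients of the
characteristic polynomial; index `i` stands for degree `i + 1`, as in
`MvPolynomial.esymmAlgEquiv`. -/
def charEsymm {T : Type*} [CommRing T] (B : Matrix (Fin n) (Fin n) T) (i : Fin n) : T :=
  (-1) ^ (i + 1 : ℕ) * B.charpoly.coeff (n - (i + 1))

theorem charEsymm_eq_aeval_esymm {B : Matrix (Fin n) (Fin n) T} {y : Fin n → T}
    (hB : B.charpoly = ∏ i, (Polynomial.X - Polynomial.C (y i))) (i : Fin n) :
    charEsymm B i = aeval y (esymm (Fin n) ℂ (i + 1)) := by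
  have hprod : (((Finset.univ.val.map y).map fun t => Polynomial.X - Polynomial.C t).prod) =
      B.charpoly := by
    rw [hB, Multiset.map_map]
    rfl
  have vieta := (Finset.univ.val.map y).prod_X_sub_C_coeff (k := n - (i + 1)) (by simp)
  have hsub : n - (n - ((i : ℕ) + 1)) = i + 1 := by have := i.isLt; lia
  rw [hprod, Multiset.card_map, Finset.card_val, Finset.card_univ, Fintype.card_fin, hsub] at vieta
  rw [charEsymm, vieta, ← mul_assoc, ← mul_pow, neg_one_mul, neg_neg, one_pow, one_mul,
    aeval_esymm_eq_multiset_esymm]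

/-- The polynomial in the entries of the generic matrix whose value at a matrix with eigenvalues
`y` is `P(y)`. -/
def spectralLift (P : symmetricSubalgebra (Fin n) ℂ) : MvPolynomial (Fin n × Fin n) ℂ :=
  aeval (charEsymm (genMat n)) ((esymmAlgEquiv (Fin n) ℂ (Fintype.card_fin n)).symm P)

theorem evalMat_spectralLift (P : symmetricSubalgebra (Fin n) ℂ) {B : Matrix (Fin n) (Fin n) T}
    {y : Fin n → T} (hB : B.charpoly = ∏ i, (Polynomial.X - Polynomial.C (y i))) :
    evalMat B (spectralLift P) = aeval y (P : MvPolynomial (Fin n) ℂ) := by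
  have evalMat_charEsymm (i : Fin n) :
      evalMat B (charEsymm (genMat n) i) = aeval y (esymm (Fin n) ℂ (i + 1)) := by
    rw [← charEsymm_eq_aeval_esymm hB, charEsymm, charEsymm, map_mul, map_pow, map_neg, map_one,
      ← RingHom.coe_coe (evalMat B), ← Polynomial.coeff_map, ← charpoly_map, map_genMat_evalMat]
  have hP : aeval (fun i : Fin n => esymm (Fin n) ℂ (i + 1))
      ((esymmAlgEquiv (Fin n) ℂ (Fintype.card_fin n)).symm P) = (P : MvPolynomial (Fin n) ℂ) := by
    rw [← esymmAlgHom_apply]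
    exact congrArg Subtype.val
      ((esymmAlgEquiv (Fin n) ℂ (Fintype.card_fin n)).apply_symm_apply P)
  rw [spectralLift, ← hP, comp_aeval_apply, comp_aeval_apply]
  simp only [evalMat_charEsymm]

theorem evalMat_diagonal_X_spectralLift (P : symmetricSubalgebra (Fin n) ℂ) :
    evalMat (diagonal X) (spectralLift P) = (P : MvPolynomial (Fin n) ℂ) := by
  rw [evalMat_spectralLift P (charpoly_diagonal X)]
  exact aeval_X_left_apply _

theorem spectralLift_ne_zero {P : symmetricSubalgebra (Fin n) ℂ}
    (hP : (P : MvPolynomial (Fin n) ℂ) ≠ 0) : spectralLift P ≠ 0 := fun h =>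
  hP (by rw [← evalMat_diagonal_X_spectralLift P, h, map_zero])

/-- The discriminant of the characteristic polynomial of the generic matrix. -/
def genericDiscr (n : ℕ) : MvPolynomial (Fin n × Fin n) ℂ :=
  spectralLift ⟨vdm X ^ 2, isSymmetric_vdm_X_sq⟩

theorem evalMat_genericDiscr {B : Matrix (Fin n) (Fin n) T} {y : Fin n → T}
    (hB : B.charpoly = ∏ i, (Polynomial.X - Polynomial.C (y i))) :
    evalMat B (genericDiscr n) = vdm y ^ 2 := by
  rw [genericDiscr, evalMat_spectralLift _ hB, map_pow, map_vdm]
  simp only [aeval_X]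

theorem genericDiscr_ne_zero : genericDiscr n ≠ 0 :=
  spectralLift_ne_zero (pow_ne_zero 2 (vdm_ne_zero_iff.2 X_injective))

theorem det_krylov_genMat_ne_zero : (krylov 1 (genMat n)).det ≠ 0 := fun h => by
  have hdiag := evalMat_det_krylov_genMat (diagonal (X : Fin n → MvPolynomial (Fin n) ℂ))
  rw [h, map_zero] at hdiag
  exact vdm_ne_zero_iff.2 X_injective hdiag.symm

/-- Away from the zeros of the discriminant and of the Krylov determinant, the eigenvector matrix
`eigenRows` diagonalizes. -/
theorem eq_of_evalMat_eq_of_diagonalizable {p q : MvPolynomial (Fin n × Fin n) ℂ}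
    (h : ∀ (B Q : Matrix (Fin n) (Fin n) ℂ) (y : Fin n → ℂ), Q.det ≠ 0 → Q * B = diagonal y * Q →
      evalMat B p = evalMat B q) : p = q := by
  have hne : (krylov 1 (genMat n)).det * genericDiscr n ≠ 0 :=
    mul_ne_zero det_krylov_genMat_ne_zero genericDiscr_ne_zero
  refine mul_right_cancel₀ hne (MvPolynomial.funext fun x => ?_)
  obtain ⟨B, rfl⟩ : ∃ B : Matrix (Fin n) (Fin n) ℂ, x = fun ij => B ij.1 ij.2 :=
    ⟨of fun i j => x (i, j), rfl⟩
  rw [← evalMat_eq_eval, ← evalMat_eq_eval, map_mul _ p, map_mul _ q]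
  by_cases hB : evalMat B ((krylov 1 (genMat n)).det * genericDiscr n) = 0
  · rw [hB, mul_zero, mul_zero]
  obtain ⟨y, hy⟩ := exists_eq_prod_X_sub_C_of_splits (IsAlgClosed.splits B.charpoly)
    (charpoly_monic B) ((charpoly_natDegree_eq_dim B).trans (Fintype.card_fin n))
  rw [map_mul, evalMat_genericDiscr hy, evalMat_det_krylov_genMat, mul_eq_zero, not_or] at hB
  have hQ : (eigenRows y B).det ≠ 0 := ne_zero_of_dvd_ne_zero
    (mul_ne_zero (pow_ne_zero _ (pow_ne_zero _ (pow_ne_zero_iff two_ne_zero |>.1 hB.2))) hB.1)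
    (det_eigenRows_dvd y B)
  rw [h B _ y hQ (eigenRows_mul hy)]

theorem genericDiscr_eq_det_traceHankel : genericDiscr n = (traceHankel (genMat n)).det :=
  eq_of_evalMat_eq_of_diagonalizable fun B Q y hQ h => by
    rw [evalMat_genericDiscr ((charpoly_eq_of_mul_eq_mul hQ h).trans (charpoly_diagonal y)),
      evalMat_det_traceHankel_genMat, det_traceHankel_of_mul_eq_diagonal_mul hQ h]

end Evaluation

section Degrees

open MvPolynomial Matrix

theorem isHomogeneous_det {ι σ R : Type*} [Fintype ι] [DecidableEq ι] [CommRing R]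
    {M : Matrix ι ι (MvPolynomial σ R)} {a b : ι → ℕ}
    (hM : ∀ i j, (M i j).IsHomogeneous (a i + b j)) :
    M.det.IsHomogeneous (∑ i, a i + ∑ i, b i) := by
  rw [det_apply']
  refine IsHomogeneous.sum _ _ _ fun e _ => ?_
  rw [show ∑ i, a i + ∑ i, b i = 0 + ∑ i, (a (e i) + b i) by
    rw [Finset.sum_add_distrib, Equiv.sum_comp e a, zero_add]]
  have hsign : ((e.sign : ℤ) : MvPolynomial σ R).IsHomogeneous 0 := by
    rw [← map_intCast (C : R →+* MvPolynomial σ R)]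
    exact isHomogeneous_C σ _
  exact hsign.mul (IsHomogeneous.prod _ _ _ fun i _ => hM (e i) i)

variable {n : ℕ}

theorem isHomogeneous_genMat_pow_apply (k : ℕ) (i j : Fin n) :
    ((genMat n ^ k) i j).IsHomogeneous k := by
  induction k generalizing j with
  | zero =>
    rw [pow_zero, one_apply]
    split_ifs
    exacts [isHomogeneous_one _ _, isHomogeneous_zero _ _ _]
  | succ k ih =>
    rw [pow_succ, mul_apply]
    exact IsHomogeneous.sum _ _ _ fun l _ => (ih l).mul (isHomogeneous_X _ _)

theorem exists_isHomogeneous_det_krylov_genMat (n : ℕ) :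
    ∃ m, (krylov 1 (genMat n)).det.IsHomogeneous m := by
  refine ⟨_, isHomogeneous_det (a := fun i => Fintype.equivFin (Fin n) i) (b := 0) fun i j => ?_⟩
  simp only [krylov, of_apply, vecMul, one_dotProduct, Pi.zero_apply, add_zero]
  exact IsHomogeneous.sum _ _ _ fun l _ => isHomogeneous_genMat_pow_apply _ l j

theorem exists_isHomogeneous_genericDiscr (n : ℕ) : ∃ m, (genericDiscr n).IsHomogeneous m := by
  rw [genericDiscr_eq_det_traceHankel]
  refine ⟨_, isHomogeneous_det (a := fun i => Fintype.equivFin (Fin n) i)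
    (b := fun j => Fintype.equivFin (Fin n) j) fun i j => ?_⟩
  simp only [traceHankel, of_apply, trace, diag_apply]
  exact IsHomogeneous.sum _ _ _ fun l _ => isHomogeneous_genMat_pow_apply _ l l

theorem isRelPrime_spectralLift {P : symmetricSubalgebra (Fin n) ℂ}
    (hP : IsRelPrime (P : MvPolynomial (Fin n) ℂ) (vdm X))
    {w : MvPolynomial (Fin n × Fin n) ℂ} {m r : ℕ} (hw : w.IsHomogeneous m)
    (hdiag : evalMat (diagonal X) w = (vdm X : MvPolynomial (Fin n) ℂ) ^ r) :
    IsRelPrime (spectralLift P) w := by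
  have entry_isHomogeneous (ij : Fin n × Fin n) :
      (diagonal (X : Fin n → MvPolynomial (Fin n) ℂ) ij.1 ij.2).IsHomogeneous 1 := by
    rw [diagonal_apply]
    split_ifs
    exacts [isHomogeneous_X _ _, isHomogeneous_zero _ _ _]
  have map_isHomogeneous : (evalMat (diagonal X) w : MvPolynomial (Fin n) ℂ).IsHomogeneous m := by
    simpa only [evalMat, one_mul] using hw.aeval _ entry_isHomogeneous
  have map_ne_zero : (evalMat (diagonal X) w : MvPolynomial (Fin n) ℂ) ≠ 0 := by
    rw [hdiag]
    exact pow_ne_zero r (vdm_ne_zero_iff.2 X_injective)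
  have hw₀ : w ≠ 0 := by
    rintro rfl
    exact map_ne_zero (map_zero _)
  refine isRelPrime_of_totalDegree_map_eq (evalMat (diagonal X))
    (totalDegree_aeval_le_of_totalDegree_le_one fun ij => (entry_isHomogeneous ij).totalDegree_le)
    map_ne_zero ?_ ?_
  · rw [map_isHomogeneous.totalDegree map_ne_zero, hw.totalDegree hw₀]
  · rw [evalMat_diagonal_X_spectralLift, hdiag]
    exact hP.pow_right

theorem isRelPrime_spectralLift_genericDiscr {P : symmetricSubalgebra (Fin n) ℂ}
    (hP : IsRelPrime (P : MvPolynomial (Fin n) ℂ) (vdm X)) :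
    IsRelPrime (spectralLift P) (genericDiscr n) :=
  isRelPrime_spectralLift hP (exists_isHomogeneous_genericDiscr n).choose_spec
    (evalMat_genericDiscr (charpoly_diagonal X))

theorem isRelPrime_spectralLift_det_krylov_genMat {P : symmetricSubalgebra (Fin n) ℂ}
    (hP : IsRelPrime (P : MvPolynomial (Fin n) ℂ) (vdm X)) :
    IsRelPrime (spectralLift P) (krylov 1 (genMat n)).det :=
  isRelPrime_spectralLift hP (exists_isHomogeneous_det_krylov_genMat n).choose_spec
    ((evalMat_det_krylov_genMat _).trans (pow_one _).symm)

end Degrees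

section Kalman

open MvPolynomial Matrix

variable {n d : ℕ}

theorem vdm_monVal_eq_of_vdm_monVal_X_eq {T : Type*} [CommRing T] [Algebra ℂ T] {m : ℕ}
    {P : MvPolynomial (Fin n) ℂ}
    (hP : vdm (monVal X : MonIdx n d → MvPolynomial (Fin n) ℂ) = vdm X ^ m * P) (y : Fin n → T) :
    vdm (monVal y : MonIdx n d → T) = vdm y ^ m * aeval y P := by
  simpa only [map_mul, map_pow, map_vdm, map_monVal, aeval_X] using congrArg (aeval y) hP

theorem symPow_mul_symPow_eq {R : Type*} [CommRing R] {Q M : Matrix (Fin n) (Fin n) R}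
    {y : Fin n → R} (h : Q * M = diagonal y * Q) :
    symPow d Q * symPow d M = diagonal (monVal y) * symPow d Q := by
  rw [← symPow_mul, h, symPow_mul, symPow_diagonal]

theorem kalmanSq_eq_krylov (c : MonIdx n d → ℂ) :
    kalmanSq d c = krylov (fun κ => C (c κ)) (symPow d (genMat n)) :=
  rfl

theorem evalMat_kalmanDet {T : Type*} [CommRing T] [Algebra ℂ T] (B : Matrix (Fin n) (Fin n) T)
    (c : MonIdx n d → ℂ) :
    evalMat B (kalmanDet d c) = (krylov (fun κ => algebraMap ℂ T (c κ)) (symPow d B)).det := by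
  rw [kalmanDet, kalmanSq_eq_krylov, ← RingHom.coe_coe (evalMat B), RingHom.map_det,
    RingHom.mapMatrix_apply, map_krylov, map_symPow, map_genMat_evalMat]
  simp only [RingHom.coe_coe, ← algebraMap_eq, AlgHom.commutes]

/-- The `d`-th symmetric power of the eigenvector matrix of `B` diagonalizes `symPow d B`. -/
theorem aeval_dvd_evalMat_mul_kalmanDet {T : Type*} [CommRing T] [Algebra ℂ T]
    {B : Matrix (Fin n) (Fin n) T} {y : Fin n → T}
    (hB : B.charpoly = ∏ i, (Polynomial.X - Polynomial.C (y i)))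
    {m : ℕ} {P : MvPolynomial (Fin n) ℂ}
    (hP : vdm (monVal X : MonIdx n d → MvPolynomial (Fin n) ℂ) = vdm X ^ m * P)
    (c : MonIdx n d → ℂ) :
    aeval y P ∣ evalMat B ((((genericDiscr n ^ n) ^ n * (krylov 1 (genMat n)).det) ^
      (d * Fintype.card (MonIdx n d))) ^ Fintype.card (MonIdx n d) * kalmanDet d c) := by
  have det_eigenRows_dvd_evalMat : (eigenRows y B).det ∣
      evalMat B ((genericDiscr n ^ n) ^ n * (krylov 1 (genMat n)).det) := by
    rw [map_mul, map_pow, map_pow, evalMat_genericDiscr hB, evalMat_det_krylov_genMat]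
    refine (det_eigenRows_dvd y B).trans (mul_dvd_mul_right ?_ _)
    rw [Fintype.card_fin]
    exact pow_dvd_pow_of_dvd (pow_dvd_pow_of_dvd (dvd_pow_self _ two_ne_zero) n) n
  have aeval_dvd_vdm : aeval y P ∣ vdm (monVal y : MonIdx n d → T) := by
    rw [vdm_monVal_eq_of_vdm_monVal_X_eq hP y]
    exact dvd_mul_left _ _
  refine aeval_dvd_vdm.trans ((vdm_dvd_det_pow_mul_det_krylov
    (symPow_mul_symPow_eq (eigenRows_mul hB)) fun κ => algebraMap ℂ T (c κ)).trans ?_)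
  rw [map_mul, evalMat_kalmanDet, map_pow, map_pow]
  exact mul_dvd_mul_right (pow_dvd_pow_of_dvd ((det_symPow_dvd _).trans
    (pow_dvd_pow_of_dvd det_eigenRows_dvd_evalMat _)) _) _

theorem dvd_of_evalMat_dvd_evalMat {S : Type*} [CommRing S] [IsDomain S] [Algebra ℂ S]
    [Algebra (MvPolynomial (Fin n × Fin n) ℂ) S]
    [IsScalarTower ℂ (MvPolynomial (Fin n × Fin n) ℂ) S]
    [Algebra.IsIntegral (MvPolynomial (Fin n × Fin n) ℂ) S]
    [FaithfulSMul (MvPolynomial (Fin n × Fin n) ℂ) S] {p q : MvPolynomial (Fin n × Fin n) ℂ}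
    (h : evalMat ((genMat n).map (algebraMap _ S)) p ∣
      evalMat ((genMat n).map (algebraMap _ S)) q) :
    p ∣ q := by
  have evalMat_eq (r : MvPolynomial (Fin n × Fin n) ℂ) :
      evalMat ((genMat n).map (algebraMap _ S)) r = algebraMap _ S r :=
    DFunLike.congr_fun (evalMat_map_genMat (IsScalarTower.toAlgHom ℂ _ S)) r
  rw [evalMat_eq, evalMat_eq] at h
  exact dvd_of_algebraMap_dvd_algebraMap h

theorem spectralLift_dvd_mul_kalmanDet {m : ℕ} (P : symmetricSubalgebra (Fin n) ℂ)
    (hP : vdm (monVal X : MonIdx n d → MvPolynomial (Fin n) ℂ) =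
      vdm X ^ m * (P : MvPolynomial (Fin n) ℂ))
    (c : MonIdx n d → ℂ) :
    spectralLift P ∣ (((genericDiscr n ^ n) ^ n * (krylov 1 (genMat n)).det) ^
      (d * Fintype.card (MonIdx n d))) ^ Fintype.card (MonIdx n d) * kalmanDet d c := by
  obtain ⟨y, hy⟩ := exists_eq_prod_X_sub_C_absoluteIntegralClosure (charpoly_monic (genMat n))
    ((charpoly_natDegree_eq_dim _).trans (Fintype.card_fin n))
  rw [← charpoly_map] at hy
  apply dvd_of_evalMat_dvd_evalMat (S := AbsoluteIntegralClosure (MvPolynomial (Fin n × Fin n) ℂ))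
  rw [evalMat_spectralLift P hy]
  exact aeval_dvd_evalMat_mul_kalmanDet hy hP c

theorem spectralLift_dvd_kalmanDet {m : ℕ} (P : symmetricSubalgebra (Fin n) ℂ)
    (hP : vdm (monVal X : MonIdx n d → MvPolynomial (Fin n) ℂ) =
      vdm X ^ m * (P : MvPolynomial (Fin n) ℂ))
    (hrel : IsRelPrime (P : MvPolynomial (Fin n) ℂ) (vdm X)) (c : MonIdx n d → ℂ) :
    spectralLift P ∣ kalmanDet d c :=
  ((((isRelPrime_spectralLift_genericDiscr hrel).pow_right.pow_right.mul_right
    (isRelPrime_spectralLift_det_krylov_genMat hrel)).pow_right).pow_right).dvd_of_dvd_mul_left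
      (spectralLift_dvd_mul_kalmanDet P hP c)

theorem eq_genericDiscr_of_eval_eq_pairProdSq {Δ : MvPolynomial (Fin n × Fin n) ℂ}
    (hΔ : ∀ B : Matrix (Fin n) (Fin n) ℂ,
      eval (fun ij => B ij.1 ij.2) Δ = pairProdSq B.charpoly.roots) : Δ = genericDiscr n :=
  eq_of_evalMat_eq_of_diagonalizable fun B Q y hQ h => by
    rw [evalMat_eq_eval, hΔ, pairProdSq_roots_charpoly_of_mul_eq_diagonal_mul hQ h,
      evalMat_genericDiscr ((charpoly_eq_of_mul_eq_mul hQ h).trans (charpoly_diagonal y))]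

theorem eq_spectralLift_sq_mul_of_eval_eq_pairProdSq {Δd : MvPolynomial (Fin n × Fin n) ℂ}
    (hΔd : ∀ B : Matrix (Fin n) (Fin n) ℂ,
      eval (fun ij => B ij.1 ij.2) Δd = pairProdSq (symPow d B).charpoly.roots)
    {m : ℕ} (P : symmetricSubalgebra (Fin n) ℂ)
    (hP : vdm (monVal X : MonIdx n d → MvPolynomial (Fin n) ℂ) =
      vdm X ^ m * (P : MvPolynomial (Fin n) ℂ)) :
    Δd = spectralLift P ^ 2 * genericDiscr n ^ m :=
  eq_of_evalMat_eq_of_diagonalizable fun B Q y hQ h => by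
    have hB := (charpoly_eq_of_mul_eq_mul hQ h).trans (charpoly_diagonal y)
    have hsymPow : (symPow d Q).det ≠ 0 :=
      ne_zero_of_dvd_ne_zero (pow_ne_zero _ hQ) (det_symPow_dvd Q)
    rw [evalMat_eq_eval, hΔd, map_mul, map_pow, map_pow, evalMat_genericDiscr hB,
      evalMat_spectralLift P hB, pairProdSq_roots_charpoly_of_mul_eq_diagonal_mul hsymPow
        (symPow_mul_symPow_eq h), vdm_monVal_eq_of_vdm_monVal_X_eq hP y]
    ring

end Kalman

/-- Let `Δ_d^sat` be the polynomial of smallest total degree with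
`Δ_d = Δ_d^sat · Δ^k` for some `k ∈ ℕ`. Then `Δ_d^sat` is a perfect square in `ℂ[A]`, and
its square root divides `det K_d(f)` for every nonzero `f ∈ ℂ[x]_d`. -/
theorem sat_discriminant_is_square_and_divides (n d : ℕ) (hn : 0 < n) (hd : 0 < d)
    (Δ Δd S : MvPolynomial (Fin n × Fin n) ℂ) (k : ℕ)
    (hΔ : ∀ B : Matrix (Fin n) (Fin n) ℂ,
      MvPolynomial.eval (fun ij => B ij.1 ij.2) Δ = pairProdSq B.charpoly.roots)
    (hΔd : ∀ B : Matrix (Fin n) (Fin n) ℂ,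
      MvPolynomial.eval (fun ij => B ij.1 ij.2) Δd = pairProdSq (symPow d B).charpoly.roots)
    (hfac : Δd = S * Δ ^ k)
    (hmin : ∀ (S' : MvPolynomial (Fin n × Fin n) ℂ) (k' : ℕ), Δd = S' * Δ ^ k' →
      S.totalDegree ≤ S'.totalDegree) :
    ∃ g : MvPolynomial (Fin n × Fin n) ℂ, S = g ^ 2 ∧
      ∀ c : MonIdx n d → ℂ, c ≠ 0 → g ∣ kalmanDet d c := by
  obtain ⟨m, P, hP, hrel⟩ := exists_vdm_monVal_X_eq (n := n) (R := ℂ) d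
  obtain rfl := eq_genericDiscr_of_eval_eq_pairProdSq hΔ
  have hΔd_eq : Δd = spectralLift P ^ 2 * genericDiscr n ^ m :=
    eq_spectralLift_sq_mul_of_eval_eq_pairProdSq hΔd P hP
  have hP₀ : (P : MvPolynomial (Fin n) ℂ) ≠ 0 :=
    right_ne_zero_of_mul (hP ▸ vdm_ne_zero_iff.2 monVal_X_injective)
  have hassoc : Associated (spectralLift P ^ 2) S :=
    associated_of_isRelPrime_of_totalDegree_le genericDiscr_ne_zero
      (pow_ne_zero 2 (spectralLift_ne_zero hP₀))
      (isRelPrime_spectralLift_genericDiscr hrel).pow_left (hfac.symm.trans hΔd_eq)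
      (hmin _ m hΔd_eq)
  obtain ⟨u, hu, hS⟩ := exists_sq_eq_of_associated_sq hassoc
  refine ⟨MvPolynomial.C u * spectralLift P, hS, fun c _ => ?_⟩
  have hunit : IsUnit (MvPolynomial.C u : MvPolynomial (Fin n × Fin n) ℂ) :=
    (isUnit_iff_ne_zero.2 hu).map MvPolynomial.C
  exact hunit.mul_left_dvd.2 (spectralLift_dvd_kalmanDet P hP hrel c)

end
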